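/- arXiv:2404.19229 — 2 statements merged into one kernel-verified Lean document; each statement's English description precedes it below -/
import Mathlib

section
/- Let V be a complex vector space, u ∈ V, and N a nilpotent linear endomorphism of V with N^{n+1}u = 0 but N^n u ≠ 0. Then for every 0 ≤ k ≤ n+1 and all z ∈ ℂ, the wedge product (e^{zN}u ∧ e^{zN}Nu ∧ ... ∧ e^{zN}N^{n-k}u) ∧ (e^{z̄N}u ∧ e^{z̄N}Nu ∧ ... ∧ e^{z̄N}N^{k-1}u) equals (C_{n-k+1,k} / ((n-k+1)k)!) · (z̄ - z)^{(n-k+1)k} · (u ∧ Nu ∧ ... ∧ N^n u), where C_{n-k+1,k} is the number of standard Young tableaux of rectangular shape k × (n-k+1). -/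
/-- The number of standard Young tableaux of rectangular shape with `b` rows and
`a` columns: bijective fillings of the `b × a` rectangle by `{0, …, b*a - 1}` that
strictly increase along rows and down columns. -/
noncomputable def rectSYTCard (a b : ℕ) : ℕ :=
  Nat.card {f : Fin b × Fin a → Fin (b * a) //
    Function.Bijective f ∧
    (∀ (i : Fin b) (j j' : Fin a), j < j' → f (i, j) < f (i, j')) ∧
    (∀ (i i' : Fin b) (j : Fin a), i < i' → f (i, j) < f (i', j))}

/-!
Since `e^{zN} N^l u = ∑_{i ≥ l} z^{i-l} / (i-l)! N^i u`, the product of the two wedges is a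
determinant times the wedge of all `N^l u`. Column operations by `e^{-zN}` turn the first `m` rows
into `(1 0)`, so that only the `k × k` determinant of `(w - z)^{m-i+j} / (m-i+j)!` is left. This is
Aitken's determinant for the rectangle: more generally, for row lengths `a₀ ≥ a₁ ≥ ⋯` the
determinant of `z^{aᵢ-i+j} / (aᵢ-i+j)!` is `z^r / r!` times the number of standard tableaux of that
shape of size `r`. Both sides satisfy the same recursion, which removes one corner at a time: on the
determinant side it comes from `x * (z^x / x!) = z * (z^{x-1} / (x-1)!)`, and decreasing a row that
does not end in a corner makes two rows equal or the last row zero.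
-/

open Finset Function
open scoped Nat

section LinearExtensions

variable {α β : Type*} [Preorder α] [Preorder β] {n : ℕ} {S : Set α}

/-- The linear extensions of a subset `S` of a preorder, encoded as the repetition-free lists of
the elements of `S`, of length `n`, in which a smaller element always precedes a larger one. The set
is empty unless `S` has `n` elements. For the cells of a diagram these are the standard tableaux,
read as the order in which the cells are filled. -/
def linearExtensions (n : ℕ) (S : Set α) : Set (Fin n → α) :=
  {g | Injective g ∧ Set.range g = S ∧ ∀ i j, g i < g j → i < j}

lemma finite_linearExtensions (n : ℕ) (S : Set α) : (linearExtensions n S).Finite := by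
  obtain h | ⟨g, -, rfl, -⟩ := (linearExtensions n S).eq_empty_or_nonempty
  · simp [h]
  · refine (Set.Finite.pi' fun _ ↦ Set.finite_range g).subset ?_
    rintro f ⟨-, hf, -⟩ i
    exact hf ▸ Set.mem_range_self i

lemma linearExtensions_zero_empty : linearExtensions 0 (∅ : Set α) = Set.univ := by
  ext g
  simp [linearExtensions, injective_of_subsingleton g]

lemma snoc_mem_linearExtensions {g : Fin n → α} {x : α} :
    (Fin.snoc g x : Fin (n + 1) → α) ∈ linearExtensions (n + 1) S ↔
      Maximal (· ∈ S) x ∧ g ∈ linearExtensions n (S \ {x}) := by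
  simp only [linearExtensions, Set.mem_ofPred_eq, Fin.snoc_injective_iff, Fin.range_snoc,
    Fin.forall_fin_succ', Fin.snoc_castSucc, Fin.snoc_last, Fin.castSucc_lt_castSucc_iff,
    Fin.castSucc_lt_last, lt_irrefl, maximal_iff_forall_gt]
  constructor
  · rintro ⟨⟨hg, hx⟩, rfl, hlt, hmax, -⟩
    refine ⟨⟨Set.mem_insert _ _, ?_⟩, hg, by simp [hx], fun i j ↦ (hlt i).1 j⟩
    rintro y hxy (rfl | ⟨i, rfl⟩)
    · exact hxy.false
    · exact (Fin.castSucc_lt_last i).not_gt (hmax i hxy)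
  · rintro ⟨⟨hx, hmax⟩, hg, hrange, hlt⟩
    have hmem (i : Fin n) : g i ∈ S \ {x} := hrange ▸ Set.mem_range_self i
    refine ⟨⟨hg, by simp [hrange]⟩, by simp [hrange, Set.insert_eq_of_mem hx],
      fun i ↦ ⟨hlt i, fun _ ↦ trivial⟩, fun i hi ↦ (hmax hi (hmem i).1).elim, False.elim⟩

lemma ncard_linearExtensions_succ (T : Finset α) (hT : ∀ x, x ∈ T ↔ Maximal (· ∈ S) x) :
    (linearExtensions (n + 1) S).ncard = ∑ x ∈ T, (linearExtensions n (S \ {x})).ncard := by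
  classical
  have hlast {g : Fin (n + 1) → α} (hg : g ∈ linearExtensions (n + 1) S) : g (Fin.last n) ∈ T := by
    rw [← Fin.snoc_init_self g, snoc_mem_linearExtensions] at hg
    exact (hT _).2 hg.1
  rw [Set.ncard_eq_toFinset_card _ (finite_linearExtensions _ _),
    Finset.card_eq_sum_card_fiberwise fun g hg ↦ hlast (by simpa using hg)]
  refine Finset.sum_congr rfl fun x hx ↦ ?_
  rw [← Set.ncard_image_of_injective _ (Fin.snoc_left_injective (α := fun _ ↦ α) x),
    ← Set.ncard_coe_finset]
  congr 1
  ext g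
  simp only [coe_filter, Set.Finite.mem_toFinset, Set.mem_ofPred_eq, Set.mem_image]
  constructor
  · rintro ⟨hg, rfl⟩
    rw [← Fin.snoc_init_self g, snoc_mem_linearExtensions] at hg
    exact ⟨_, hg.2, Fin.snoc_init_self g⟩
  · rintro ⟨f, hf, rfl⟩
    exact ⟨snoc_mem_linearExtensions.2 ⟨(hT x).1 hx, hf⟩, Fin.snoc_last _ _⟩

lemma ncard_linearExtensions_range (e : α ↪o β) :
    (linearExtensions n (Set.range e)).ncard =
      Nat.card {f : α → Fin n // Bijective f ∧ StrictMono f} := by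
  symm
  refine Nat.card_congr (Equiv.ofBijective
    (fun f ↦ ⟨e ∘ (Equiv.ofBijective f.1 f.2.1).symm, ?_⟩) ⟨?_, ?_⟩)
  · obtain ⟨f, hf, hmono⟩ := f
    refine ⟨e.injective.comp (Equiv.injective _), by simp [Set.range_comp], fun i j hij ↦ ?_⟩
    simpa [Equiv.ofBijective_apply_symm_apply] using hmono (e.lt_iff_lt.1 hij)
  · rintro ⟨f, hf, _⟩ ⟨f', hf', _⟩ h
    have hsymm : (Equiv.ofBijective f hf).symm = (Equiv.ofBijective f' hf').symm :=
      DFunLike.coe_injective (e.injective.comp_left (congrArg Subtype.val h))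
    exact Subtype.ext (congrArg DFunLike.coe (Equiv.symm_bijective.injective hsymm))
  · rintro ⟨g, hg, hrange, hlt⟩
    choose h hh using fun i ↦ (hrange ▸ Set.mem_range_self i : g i ∈ Set.range e)
    have hbij : Bijective h := by
      refine ⟨fun i j hij ↦ hg (by rw [← hh, hij, hh]), fun x ↦ ?_⟩
      obtain ⟨i, hi⟩ : e x ∈ Set.range g := hrange ▸ Set.mem_range_self x
      exact ⟨i, e.injective (by rw [hh, hi])⟩
    let E := Equiv.ofBijective h hbij
    refine ⟨⟨E.symm, E.symm.bijective, fun x y hxy ↦ hlt _ _ ?_⟩, ?_⟩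
    · rw [← hh, ← hh]
      simpa [E, Equiv.ofBijective_apply_symm_apply] using hxy
    · refine Subtype.ext (funext fun i ↦ ?_)
      simp [E, hh]

end LinearExtensions

lemma strictMono_prod_iff {α β γ : Type*} [PartialOrder α] [PartialOrder β] [Preorder γ]
    {f : α × β → γ} :
    StrictMono f ↔ (∀ a, StrictMono fun b ↦ f (a, b)) ∧ ∀ b, StrictMono fun a ↦ f (a, b) := by
  refine ⟨fun h ↦ ⟨fun a _ _ hb ↦ h (Prod.mk_lt_mk_iff_right.2 hb),
    fun b _ _ ha ↦ h (Prod.mk_lt_mk_iff_left.2 ha)⟩, ?_⟩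
  rintro ⟨hr, hl⟩ ⟨a, b⟩ ⟨a', b'⟩ h
  obtain ⟨ha, hb⟩ := Prod.mk_le_mk.1 h.le
  obtain rfl | ha := ha.eq_or_lt
  · exact hr a (Prod.mk_lt_mk_iff_right.1 h)
  · exact (hl b ha).trans_le ((hr a').monotone hb)

/-- The cells of the left-justified diagram whose row `i` has length `a i`; a Young diagram when `a`
is antitone. Cells are pairs (row, column), ordered componentwise. -/
def rowCells {b : ℕ} (a : Fin b → ℕ) : Set (Fin b × ℕ) :=
  {p | p.2 < a p.1}

/-- Row `i` of the diagram with row lengths `a` ends in a removable corner, that is, it can be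
shortened by one cell without becoming shorter than a row below it. -/
def IsCornerRow {b : ℕ} (a : Fin b → ℕ) (i : Fin b) : Prop :=
  0 < a i ∧ ∀ j, i < j → a j < a i

section RowCells

variable {b : ℕ} {a : Fin b → ℕ} {i : Fin b}

lemma rowCells_diff_singleton (a : Fin b → ℕ) (i : Fin b) :
    rowCells a \ {(i, a i - 1)} = rowCells (update a i (a i - 1)) := by
  ext ⟨j, q⟩
  obtain rfl | hj := eq_or_ne j i
  · simp only [rowCells, Set.mem_sdiff, Set.mem_ofPred_eq, Set.mem_singleton_iff, Prod.mk.injEq,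
      true_and, update_self]
    omega
  · simp [rowCells, hj]

lemma maximal_mem_rowCells (ha : Antitone a) {p : Fin b × ℕ} :
    Maximal (· ∈ rowCells a) p ↔ IsCornerRow a p.1 ∧ p.2 = a p.1 - 1 := by
  obtain ⟨i, q⟩ := p
  simp only [maximal_iff_forall_gt, rowCells, IsCornerRow, Set.mem_ofPred_eq, Prod.forall]
  constructor
  · rintro ⟨hq, hmax⟩
    have hq' : ¬ q + 1 < a i := hmax i (q + 1) (Prod.mk_lt_mk_iff_right.2 q.lt_succ_self)
    refine ⟨⟨by omega, fun j hij ↦ ?_⟩, by omega⟩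
    have := hmax j q (Prod.mk_lt_mk_iff_left.2 hij)
    omega
  · rintro ⟨⟨hi, hlt⟩, rfl⟩
    refine ⟨by omega, fun j r hjr ↦ ?_⟩
    obtain ⟨hij, hr⟩ | ⟨hij, hr⟩ := Prod.mk_lt_mk.1 hjr
    · have := hlt j hij
      omega
    · have := ha hij
      omega

lemma ncard_linearExtensions_rowCells_succ [DecidablePred (IsCornerRow a)] (ha : Antitone a)
    (n : ℕ) :
    (linearExtensions (n + 1) (rowCells a)).ncard =
      ∑ i with IsCornerRow a i, (linearExtensions n (rowCells (update a i (a i - 1)))).ncard := by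
  rw [ncard_linearExtensions_succ (image (fun i ↦ (i, a i - 1)) {i | IsCornerRow a i}),
    sum_image fun i _ j _ h ↦ congrArg Prod.fst h]
  · simp only [rowCells_diff_singleton]
  · rintro ⟨i, q⟩
    simp only [mem_image, mem_filter, mem_univ, true_and, Prod.mk.injEq, ↓existsAndEq,
      maximal_mem_rowCells ha, and_congr_right_iff]
    exact fun _ ↦ eq_comm

lemma IsCornerRow.antitone_update (hi : IsCornerRow a i) (ha : Antitone a) :
    Antitone (update a i (a i - 1)) := by
  intro p q hpq
  have hle := ha hpq
  by_cases hp : p = i <;> by_cases hq : q = i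
  · rw [hp, hq]
  · subst hp
    have := hi.2 q (hpq.lt_of_ne' hq)
    simp only [update_self, update_of_ne hq]
    omega
  · subst hq
    simp only [update_self, update_of_ne hp]
    omega
  · simpa only [update_of_ne hp, update_of_ne hq] using hle

lemma sum_update_sub_one_add_one {a : Fin b → ℕ} {i : Fin b} (hi : 0 < a i) :
    ∑ j, update a i (a i - 1) j + 1 = ∑ j, a j := by
  rw [sum_update_of_mem (mem_univ i), ← add_sum_erase univ a (mem_univ i), sdiff_singleton_eq_erase]
  omega

end RowCells

lemma rectSYTCard_eq_ncard_linearExtensions (a b : ℕ) :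
    rectSYTCard a b = (linearExtensions (b * a) (rowCells fun _ : Fin b ↦ a)).ncard := by
  let e : Fin b × Fin a ↪o Fin b × ℕ :=
    OrderEmbedding.ofMapLEIff (Prod.map id Fin.val) fun _ _ ↦ Iff.rfl
  have he : rowCells (fun _ : Fin b ↦ a) = Set.range e := by
    ext ⟨i, q⟩
    simp [e, rowCells]
  rw [he, ncard_linearExtensions_range]
  simp only [strictMono_prod_iff, rectSYTCard]
  refine Nat.card_congr (Equiv.subtypeEquivRight fun f ↦
    and_congr_right fun _ ↦ and_congr_right fun _ ↦ ?_)
  exact ⟨fun h j i i' ↦ h i i' j, fun h i i' j hi ↦ h j hi⟩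

section DivPow

variable {𝕜 : Type*} [Field 𝕜]

/-- The divided power `z ^ x / x!`. Allowing negative `x`, with value `0`, makes the coefficients of
`e^{zN}` and the entries of Aitken's matrix uniform in the indices. -/
def divPow (z : 𝕜) : ℤ → 𝕜
  | .ofNat n => z ^ n / n !
  | .negSucc _ => 0

lemma divPow_natCast (z : 𝕜) (n : ℕ) : divPow z n = z ^ n / n ! := rfl

lemma divPow_of_neg (z : 𝕜) : ∀ {x : ℤ}, x < 0 → divPow z x = 0
  | .negSucc _, _ => rfl

lemma divPow_zero_right (z : 𝕜) : divPow z 0 = 1 := by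
  simpa using divPow_natCast z 0

/-- The first `p` rows and `q` columns of the infinite unitriangular matrix of `e^{zN}`: row `l`
holds the coefficients of `e^{zN} N^l u` with respect to `u, Nu, …, N^{q-1} u`. -/
def expRows (p q : ℕ) (z : 𝕜) : Matrix (Fin p) (Fin q) 𝕜 :=
  .of fun l i ↦ divPow z (i - l)

lemma expRows_apply {p q : ℕ} (z : 𝕜) (l : Fin p) (i : Fin q) :
    expRows p q z l i = divPow z (i - l) := rfl

lemma det_expRows (n : ℕ) (z : 𝕜) : (expRows n n z).det = 1 := by
  rw [Matrix.det_of_isUpperTriangular]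
  · simp only [expRows_apply, sub_self, divPow_zero_right, prod_const_one]
  · intro i j hji
    exact divPow_of_neg z (sub_neg.2 (Nat.cast_lt.2 hji))

variable [CharZero 𝕜]

lemma intCast_mul_divPow (z : 𝕜) (x : ℤ) : (x : 𝕜) * divPow z x = z * divPow z (x - 1) := by
  obtain hx | hx := le_or_gt 0 x
  · lift x to ℕ using hx
    cases x with
    | zero => simp [divPow_of_neg]
    | succ n =>
      have hn : (n : 𝕜) + 1 ≠ 0 := n.cast_add_one_ne_zero
      rw [Int.natCast_succ, add_sub_cancel_right, ← Int.natCast_succ, divPow_natCast,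
        divPow_natCast, Nat.factorial_succ]
      push_cast
      field_simp
      rw [Nat.succ_eq_add_one, pow_succ']
  · rw [divPow_of_neg z hx, divPow_of_neg z (by omega), mul_zero, mul_zero]

lemma divPow_add_natCast (z w : 𝕜) (r : ℕ) :
    divPow (z + w) r = ∑ j ∈ range (r + 1), divPow z j * divPow w (r - j) := by
  rw [divPow_natCast, add_pow, sum_div]
  refine sum_congr rfl fun j hj ↦ ?_
  have hjr : j ≤ r := Nat.lt_succ_iff.1 (mem_range.1 hj)
  have hfac (n : ℕ) : (n ! : 𝕜) ≠ 0 := Nat.cast_ne_zero.2 n.factorial_ne_zero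
  rw [← Nat.cast_sub hjr, divPow_natCast, divPow_natCast, Nat.cast_choose 𝕜 hjr]
  field_simp [hfac]

lemma expRows_mul_expRows (p : ℕ) {q : ℕ} (z w : 𝕜) :
    expRows p q z * expRows q q w = expRows p q (z + w) := by
  ext ⟨l, hl⟩ ⟨i, hi⟩
  simp only [Matrix.mul_apply, expRows_apply]
  rw [Fin.sum_univ_eq_sum_range fun j ↦ divPow z ((j : ℤ) - l) * divPow w ((i : ℤ) - j)]
  obtain hil | hli := lt_or_ge i l
  · rw [divPow_of_neg _ (by omega)]
    refine sum_eq_zero fun j _ ↦ ?_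
    obtain hjl | hjl := lt_or_ge j l
    · rw [divPow_of_neg z (by omega), zero_mul]
    · rw [divPow_of_neg w (by omega), mul_zero]
  · obtain ⟨r, rfl⟩ := Nat.exists_eq_add_of_le hli
    obtain ⟨t, rfl⟩ := Nat.exists_eq_add_of_le (Nat.succ_le_of_lt hi)
    rw [Nat.succ_eq_add_one, add_assoc l, sum_range_add, sum_range_add,
      sum_eq_zero (s := range l), sum_eq_zero (s := range t), zero_add, add_zero, Nat.cast_add,
      add_sub_cancel_left, divPow_add_natCast]
    · refine sum_congr rfl fun j _ ↦ ?_
      congr 2 <;> push_cast <;> ring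
    · intro j _
      rw [divPow_of_neg w (by push_cast; omega), mul_zero]
    · intro j hj
      rw [divPow_of_neg z (by have := mem_range.1 hj; omega), zero_mul]

end DivPow

lemma sum_det_updateRow_add_mul {ι R : Type*} [Fintype ι] [DecidableEq ι] [CommRing R]
    (M : Matrix ι ι R) (c d : ι → R) :
    ∑ i, (M.updateRow i fun j ↦ (c i + d j) * M i j).det = (∑ i, (c i + d i)) * M.det := by
  simp only [Matrix.det_apply, mul_sum]
  rw [sum_comm]
  refine sum_congr rfl fun σ _ ↦ ?_
  have hσ : ∑ i, (c i + d i) = ∑ i, (c (σ i) + d i) := by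
    rw [sum_add_distrib, sum_add_distrib, Equiv.sum_comp σ c]
  rw [← smul_sum, mul_smul_comm, hσ, sum_mul, ← Equiv.sum_comp σ]
  congr 1
  refine sum_congr rfl fun i _ ↦ ?_
  rw [← mul_prod_erase _ _ (mem_univ i), ← mul_prod_erase _ _ (mem_univ i), ← mul_assoc]
  congr 1
  · rw [Matrix.updateRow_self]
  · refine prod_congr rfl fun j hj ↦ ?_
    rw [Matrix.updateRow_ne (σ.injective.ne (ne_of_mem_erase hj))]

section Aitken

variable {𝕜 : Type*} [Field 𝕜] {k : ℕ}

/-- Aitken's matrix, with entries `z^{aᵢ-i+j} / (aᵢ-i+j)!`, whose determinant counts the standard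
tableaux with row lengths `a`. The row lengths are integers so that every row, even an empty one,
can be shortened. -/
def aitken (z : 𝕜) (a : Fin k → ℤ) : Matrix (Fin k) (Fin k) 𝕜 :=
  .of fun i j ↦ divPow z (a i + j - i)

lemma aitken_apply (z : 𝕜) (a : Fin k → ℤ) (i j : Fin k) :
    aitken z a i j = divPow z (a i + j - i) := rfl

lemma aitken_zero (z : 𝕜) : aitken z (fun _ ↦ 0) = expRows k k z := by
  ext i j
  rw [aitken_apply, expRows_apply, zero_add]

lemma det_aitken_eq_zero_of_last_neg (z : 𝕜) {a : Fin k → ℤ} {i : Fin k} (hi : a i < 0)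
    (hlast : (i : ℕ) + 1 = k) : (aitken z a).det = 0 :=
  Matrix.det_eq_zero_of_row_eq_zero i fun j ↦ divPow_of_neg z (by omega)

lemma det_aitken_eq_zero_of_succ (z : 𝕜) {a : Fin k → ℤ} {i j : Fin k} (hij : (i : ℕ) + 1 = j)
    (ha : a i + 1 = a j) : (aitken z a).det = 0 := by
  refine Matrix.det_zero_of_row_eq (i := i) (j := j) (by rintro rfl; omega) (funext fun l ↦ ?_)
  rw [aitken_apply, aitken_apply]
  congr 1
  omega

lemma sum_mul_det_aitken [CharZero 𝕜] (z : 𝕜) (a : Fin k → ℤ) :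
    ((∑ i, a i : ℤ) : 𝕜) * (aitken z a).det =
      z * ∑ i, (aitken z (update a i (a i - 1))).det := by
  have hrow (i : Fin k) :
      (aitken z a).updateRow i (fun j ↦ ((a i - i : ℤ) + (j : ℤ) : 𝕜) * aitken z a i j) =
        (aitken z (update a i (a i - 1))).updateRow i
          (z • aitken z (update a i (a i - 1)) i) := by
    ext p j
    obtain rfl | hp := eq_or_ne p i
    · rw [Matrix.updateRow_self, Matrix.updateRow_self, Pi.smul_apply, smul_eq_mul, aitken_apply,
        aitken_apply, ← Int.cast_add, sub_add_eq_add_sub, intCast_mul_divPow, update_self]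
      congr 2
      ring
    · simp [Matrix.updateRow_ne hp, aitken_apply, update_of_ne hp]
  have hsum := sum_det_updateRow_add_mul (aitken z a) (fun i ↦ ((a i - i : ℤ) : 𝕜)) fun j ↦ (j : ℤ)
  simp only [hrow, Matrix.det_updateRow_smul, Matrix.updateRow_eq_self, ← mul_sum] at hsum
  rw [hsum]
  congr 1
  push_cast
  exact sum_congr rfl fun i _ ↦ by ring

lemma det_aitken_update_eq_zero (z : 𝕜) {a : Fin k → ℕ} (ha : Antitone a) {i : Fin k}
    (hi : ¬ IsCornerRow a i) :
    (aitken z (update (fun j ↦ (a j : ℤ)) i (a i - 1))).det = 0 := by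
  obtain hik | hik := (Nat.succ_le_of_lt i.isLt).eq_or_lt
  · have hai : a i = 0 := by
      by_contra hai
      exact hi ⟨Nat.pos_of_ne_zero hai, fun j hj ↦ by omega⟩
    exact det_aitken_eq_zero_of_last_neg z (by simp [hai]) hik
  · let i' : Fin k := ⟨i + 1, hik⟩
    have hii' : i < i' := Fin.lt_def.2 i.val.lt_succ_self
    have hai : a i = a i' := by
      refine (ha hii'.le).antisymm' (not_lt.1 fun hlt ↦ hi ⟨by omega, fun j hj ↦ ?_⟩)
      exact (ha (show i' ≤ j from Nat.succ_le_of_lt hj)).trans_lt hlt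
    exact det_aitken_eq_zero_of_succ z (i := i) (j := i') rfl (by simp [hii'.ne', hai])

lemma det_aitken_natCast [CharZero 𝕜] (z : 𝕜) {r : ℕ} {a : Fin k → ℕ} (ha : Antitone a)
    (hr : ∑ i, a i = r) :
    (aitken z fun i ↦ (a i : ℤ)).det = (linearExtensions r (rowCells a)).ncard * divPow z r := by
  classical
  induction r generalizing a with
  | zero =>
    obtain rfl : a = 0 := funext fun i ↦ sum_eq_zero_iff.1 hr i (mem_univ i)
    have hcells : rowCells (0 : Fin k → ℕ) = ∅ := by simp [rowCells]
    rw [hcells, linearExtensions_zero_empty]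
    simp [aitken_zero, divPow_zero_right, det_expRows]
  | succ r ih =>
    have hcorner {i : Fin k} (hi : IsCornerRow a i) :
        (aitken z (update (fun j ↦ (a j : ℤ)) i (a i - 1))).det =
          (linearExtensions r (rowCells (update a i (a i - 1)))).ncard * divPow z r := by
      rw [← ih (hi.antitone_update ha) (by have := sum_update_sub_one_add_one hi.1; omega)]
      congr 2 with j
      obtain rfl | hj := eq_or_ne j i
      · simp [Nat.cast_pred hi.1]
      · simp [hj]
    have hsum : ∑ i, (aitken z (update (fun j ↦ (a j : ℤ)) i (a i - 1))).det =
        (linearExtensions (r + 1) (rowCells a)).ncard * divPow z r := by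
      rw [ncard_linearExtensions_rowCells_succ ha, Nat.cast_sum, sum_mul, sum_filter]
      refine sum_congr rfl fun i _ ↦ ?_
      split_ifs with hi
      exacts [hcorner hi, det_aitken_update_eq_zero z ha hi]
    have hr' : ∑ i, (a i : ℤ) = (r + 1 : ℕ) := by exact_mod_cast hr
    have hr0 : ((r + 1 : ℕ) : ℤ) ≠ 0 := by omega
    refine mul_left_cancel₀ (Int.cast_ne_zero (α := 𝕜).2 hr0) ?_
    rw [mul_left_comm, intCast_mul_divPow, Nat.cast_succ, add_sub_cancel_right, mul_left_comm,
      ← hsum, ← sum_mul_det_aitken, hr', Nat.cast_succ]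

lemma det_aitken_const [CharZero 𝕜] (z : 𝕜) (m k : ℕ) :
    (aitken z fun _ : Fin k ↦ (m : ℤ)).det =
      (rectSYTCard m k : 𝕜) / ((m * k)! : 𝕜) * z ^ (m * k) := by
  rw [rectSYTCard_eq_ncard_linearExtensions, mul_comm m k,
    det_aitken_natCast z (a := fun _ ↦ m) antitone_const (r := k * m) (by simp), divPow_natCast]
  ring

end Aitken

lemma alternatingMap_sum_smul {R M N ι : Type*} [CommRing R] [AddCommGroup M] [Module R M]
    [AddCommGroup N] [Module R N] [Fintype ι] [DecidableEq ι] (f : M [⋀^ι]→ₗ[R] N)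
    (A : Matrix ι ι R) (x : ι → M) :
    f (fun i ↦ ∑ j, A i j • x j) = A.det • f x := by
  have hbasis : f.compLinearMap (Fintype.linearCombination R x) =
      (LinearMap.toSpanSingleton R N (f x)).compAlternatingMap Matrix.detRowAlternating := by
    refine Module.Basis.ext_alternating (Pi.basisFun R ι) fun v hv ↦ ?_
    obtain ⟨σ, rfl⟩ : ∃ σ : Equiv.Perm ι, σ = v :=
      ⟨.ofBijective v (Finite.injective_iff_bijective.1 hv), rfl⟩
    change AlternatingMap.compLinearMap _ _ (Pi.basisFun R ι ∘ σ) =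
      LinearMap.compAlternatingMap _ _ (Pi.basisFun R ι ∘ σ)
    rw [AlternatingMap.map_perm, AlternatingMap.map_perm]
    congr 1
    have hdet : Matrix.detRowAlternating (Pi.basisFun R ι) = (1 : R) := by
      rw [← Pi.basisFun_det]
      exact Module.Basis.det_self _
    simp [hdet]
  exact AlternatingMap.ext_iff.1 hbasis A

lemma det_append_expRows {𝕜 : Type*} [Field 𝕜] [CharZero 𝕜] (z w : 𝕜) (m k : ℕ) :
    ((Matrix.fromRows (expRows m (m + k) z) (expRows k (m + k) w)).submatrix
      finSumFinEquiv.symm id).det =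
      (aitken (w - z) fun _ : Fin k ↦ (m : ℤ)).det := by
  let P : Matrix (Fin m ⊕ Fin k) (Fin m ⊕ Fin k) 𝕜 :=
    .fromBlocks 1 0 (expRows k m (w - z)) (aitken (w - z) fun _ ↦ (m : ℤ))
  have hfactor : (Matrix.fromRows (expRows m (m + k) z) (expRows k (m + k) w)).submatrix
      finSumFinEquiv.symm id =
      P.reindex finSumFinEquiv finSumFinEquiv * expRows (m + k) (m + k) z := by
    ext l i
    refine Fin.addCases (fun l ↦ ?_) (fun l ↦ ?_) l
    · simp [P, Matrix.mul_apply, Fin.sum_univ_add, Matrix.one_apply, expRows_apply]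
    · rw [← sub_add_cancel w z, ← expRows_mul_expRows]
      simp [P, Matrix.mul_apply, Fin.sum_univ_add, aitken_apply, expRows_apply]
  rw [hfactor, Matrix.det_mul, det_expRows, mul_one, Matrix.det_reindex_self,
    Matrix.det_fromBlocks_zero₁₂, Matrix.det_one, one_mul]

section Exp

variable {𝕜 V : Type*} [Field 𝕜] [AddCommGroup V] [Module 𝕜 V]

lemma sum_smul_pow_apply_pow (N : Module.End 𝕜 V) {u : V} {K M : ℕ} (hK : (N ^ K) u = 0)
    (hM : (N ^ M) u = 0) (z : 𝕜) (l : ℕ) :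
    (∑ j ∈ range K, (z ^ j / (j ! : 𝕜)) • N ^ j) ((N ^ l) u) =
      ∑ i : Fin M, divPow z ((i : ℤ) - l) • (N ^ (i : ℕ)) u := by
  set c : ℕ → V := fun i ↦ divPow z ((i : ℤ) - l) • (N ^ i) u
  have hc {L : ℕ} (hL : (N ^ L) u = 0) (i : ℕ) (hi : L ≤ i) : c i = 0 := by
    simp only [c, Module.End.pow_map_zero_of_le hi hL, smul_zero]
  calc (∑ j ∈ range K, (z ^ j / (j ! : 𝕜)) • N ^ j) ((N ^ l) u)
      = ∑ j ∈ range K, c (l + j) := by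
        simp only [c, LinearMap.sum_apply, LinearMap.smul_apply, ← Module.End.mul_apply, ← pow_add,
          Nat.cast_add, add_sub_cancel_left, divPow_natCast, add_comm _ l]
    _ = ∑ i ∈ range (l + K), c i := by
        rw [sum_range_add, sum_eq_zero (s := range l), zero_add]
        intro i hi
        simp only [c, divPow_of_neg z (sub_neg.2 (Nat.cast_lt.2 (mem_range.1 hi))), zero_smul]
    _ = ∑ i ∈ range M, c i := by
        obtain h | h := le_total (l + K) M
        · exact (eventually_constant_sum (fun i hi ↦ hc hK i (by omega)) h).symm
        · exact eventually_constant_sum (hc hM) h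
    _ = ∑ i : Fin M, c i := (Fin.sum_univ_eq_sum_range c M).symm

end Exp

lemma ιMulti_apply_eq_prod_range {R M : Type*} [CommRing R] [AddCommGroup M] [Module R M] (n : ℕ)
    (v : ℕ → M) :
    ExteriorAlgebra.ιMulti R n (fun i ↦ v i) =
      ((List.range n).map fun l ↦ ExteriorAlgebra.ι R (v l)).prod := by
  rw [ExteriorAlgebra.ιMulti_apply, List.ofFn_eq_map, ← List.map_coe_finRange_eq_range,
    List.map_map]
  rfl

lemma ιMulti_exp_mul_ιMulti_exp {𝕜 V : Type*} [Field 𝕜] [CharZero 𝕜] [AddCommGroup V]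
    [Module 𝕜 V] (N : Module.End 𝕜 V) {u : V} {m k K : ℕ} (hK : (N ^ K) u = 0)
    (hu : (N ^ (m + k)) u = 0) (E : 𝕜 → Module.End 𝕜 V)
    (hE : ∀ z, E z = ∑ j ∈ range K, (z ^ j / (j ! : 𝕜)) • N ^ j) (z w : 𝕜) :
    ExteriorAlgebra.ιMulti 𝕜 m (fun l ↦ E z ((N ^ (l : ℕ)) u)) *
        ExteriorAlgebra.ιMulti 𝕜 k (fun l ↦ E w ((N ^ (l : ℕ)) u)) =
      (aitken (w - z) fun _ : Fin k ↦ (m : ℤ)).det •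
        ExteriorAlgebra.ιMulti 𝕜 (m + k) fun l ↦ (N ^ (l : ℕ)) u := by
  rw [ExteriorAlgebra.ιMulti_mul_ιMulti, ← det_append_expRows, ← alternatingMap_sum_smul]
  congr 1
  ext l
  refine Fin.addCases (fun l ↦ ?_) (fun l ↦ ?_) l <;>
    simp [hE, sum_smul_pow_apply_pow N hK hu, expRows_apply, -LinearMap.coe_sum]

theorem wedge_exp_nilpotent_general {𝕜 V : Type*} [Field 𝕜] [CharZero 𝕜] [AddCommGroup V]
    [Module 𝕜 V] (N : Module.End 𝕜 V) {u : V} {m k K : ℕ} (hK : (N ^ K) u = 0)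
    (hu : (N ^ (m + k)) u = 0) (E : 𝕜 → Module.End 𝕜 V)
    (hE : ∀ z, E z = ∑ j ∈ range K, (z ^ j / (j ! : 𝕜)) • N ^ j) (z w : 𝕜) :
    ((List.range m).map fun l ↦ ExteriorAlgebra.ι 𝕜 (E z ((N ^ l) u))).prod *
        ((List.range k).map fun l ↦ ExteriorAlgebra.ι 𝕜 (E w ((N ^ l) u))).prod =
      ((rectSYTCard m k : 𝕜) / ((m * k)! : 𝕜) * (w - z) ^ (m * k)) •
        ((List.range (m + k)).map fun l ↦ ExteriorAlgebra.ι 𝕜 ((N ^ l) u)).prod := by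
  simp only [← ιMulti_apply_eq_prod_range]
  rw [ιMulti_exp_mul_ιMulti_exp N hK hu E hE, det_aitken_const]

open ExteriorAlgebra in
/-- The combinatorial wedge lemma: if `N^{n+1} u = 0` but `N^n u ≠ 0`, then for
`0 ≤ k ≤ n+1` and `z ∈ ℂ`,
`(e^{zN}u ∧ ⋯ ∧ e^{zN}N^{n-k}u) ∧ (e^{z̄N}u ∧ ⋯ ∧ e^{z̄N}N^{k-1}u)
  = (C_{n-k+1,k}/((n-k+1)k)!) (z̄ - z)^{(n-k+1)k} · (u ∧ Nu ∧ ⋯ ∧ N^n u)`,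
where `C_{n-k+1,k}` is the number of standard Young tableaux of rectangular shape
with `k` rows and `n-k+1` columns. -/
theorem wedge_exp_nilpotent
    (V : Type) [AddCommGroup V] [Module ℂ V]
    (N : V →ₗ[ℂ] V) (hNnil : IsNilpotent N)
    (K : ℕ) (hK : N ^ K = 0)
    (E : ℂ → (V →ₗ[ℂ] V))
    (hE : ∀ z : ℂ, E z = ∑ j ∈ Finset.range K, (z ^ j / (j.factorial : ℂ)) • (N ^ j))
    (u : V) (n : ℕ) (hu : (N ^ n) u ≠ 0) (hu' : (N ^ (n + 1)) u = 0)
    (k : ℕ) (hk : k ≤ n + 1) (z : ℂ) :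
    (((List.range (n + 1 - k)).map fun l =>
        ExteriorAlgebra.ι ℂ (E z ((N ^ l) u))).prod *
      ((List.range k).map fun l =>
        ExteriorAlgebra.ι ℂ (E (starRingEnd ℂ z) ((N ^ l) u))).prod)
    = (((rectSYTCard (n + 1 - k) k : ℂ) / (((n + 1 - k) * k).factorial : ℂ)) *
        (starRingEnd ℂ z - z) ^ ((n + 1 - k) * k)) •
      ((List.range (n + 1)).map fun l => ExteriorAlgebra.ι ℂ ((N ^ l) u)).prod := by
  obtain ⟨m, hm⟩ := Nat.exists_eq_add_of_le' hk
  rw [hm] at hu' ⊢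
  rw [Nat.add_sub_cancel]
  exact wedge_exp_nilpotent_general N (by rw [hK, LinearMap.zero_apply]) hu' E hE z _
end

section
/- Let H be a finite-dimensional complex vector space with real structure, d an integer, and suppose (H, W, F) is a mixed Hodge structure split over ℝ (i.e. H = ⊕ I^{p,q} with conj(I^{p,q}) = I^{q,p}, W_l = ⊕_{p+q≤l} I^{p,q}, F^r = ⊕_{p≥r} I^{p,q}), with N a real nilpotent endomorphism satisfying N I^{p,q} ⊆ I^{p-1,q-1} and W = W(N,d). Then for every k and every z ∈ ℂ with Im(z) ≠ 0, exp(zN)F^k ⊕ conj(exp(zN)F^{d-k+1}) = H. -/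
/-!
Let `P` act on `I^{p,q}` as multiplication by `p`, and let `F^k`, `G^m` be the sums of the `I^{p,q}`
with `p ≥ k`, respectively `q ≥ m`. After factoring out `exp(zN)` and rescaling `N`, the claim is
`F^k ⊕ exp(N) G^{d-k+1} = H`. The monodromy weight condition enters only through the isomorphisms
`N^l : I^{p,q} ≃ I^{p-l,q-l}` for `p + q = d + l`. Since `[P, N] = -N`, we have
`P exp(N) = exp(N) (P - N)`, so `P - k` carries `F^k` into `F^{k+1}` and `exp(N) G^{d-k+1}` into
`exp(N) G^{d-k}`. As `P - k` is invertible away from `p = k`, this compares the claims for `k` and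
`k + 1`, and only the components with `p = k` remain; there a single term `N^l / l!` of the
exponential decides, which is an isomorphism.
-/

open DirectSum
open IsNilpotent (exp exp_eq_sum exp_add_of_commute exp_neg_mul_exp_self isUnit_exp)

namespace SplitMHS

section Exp

variable {A : Type*} [Ring A] {a p : A}

theorem mul_pow_succ_of_commute_lie (h : Commute a ⁅p, a⁆) (j : ℕ) :
    p * a ^ (j + 1) = a ^ (j + 1) * p + (j + 1) • (a ^ j * ⁅p, a⁆) := by
  have hlie : p * a = a * p + ⁅p, a⁆ := by rw [Ring.lie_def, add_sub_cancel]
  induction j with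
  | zero => simpa using hlie
  | succ j ih =>
    calc p * a ^ (j + 1 + 1)
        = a ^ (j + 1) * (p * a) + (j + 1) • (a ^ j * (⁅p, a⁆ * a)) := by
          rw [pow_succ _ (j + 1), ← mul_assoc, ih, add_mul, smul_mul_assoc, mul_assoc, mul_assoc]
      _ = a ^ (j + 1 + 1) * p + (j + 1 + 1) • (a ^ (j + 1) * ⁅p, a⁆) := by
          rw [hlie, ← h.eq, mul_add, ← mul_assoc, ← mul_assoc, ← pow_succ, ← pow_succ,
            succ_nsmul' _ (j + 1), add_assoc]

theorem mul_exp_of_commute_lie [Module ℚ A] (ha : IsNilpotent a) (h : Commute a ⁅p, a⁆) :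
    p * exp a = exp a * (p + ⁅p, a⁆) := by
  obtain ⟨K, hK⟩ := ha
  have hterm (j : ℕ) : p * ((j + 1).factorial : ℚ)⁻¹ • a ^ (j + 1) =
      ((j + 1).factorial : ℚ)⁻¹ • a ^ (j + 1) * p + (j.factorial : ℚ)⁻¹ • a ^ j * ⁅p, a⁆ := by
    have hcoeff : ((j + 1).factorial : ℚ)⁻¹ * (j + 1 : ℕ) = (j.factorial : ℚ)⁻¹ := by
      rw [Nat.factorial_succ]
      push_cast
      field_simp
    rw [mul_smul_comm, mul_pow_succ_of_commute_lie h, smul_add, smul_mul_assoc, smul_mul_assoc,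
      ← Nat.cast_smul_eq_nsmul ℚ, smul_smul, hcoeff]
  have hexp : exp a = ∑ j ∈ Finset.range K, ((j + 1).factorial : ℚ)⁻¹ • a ^ (j + 1) + 1 := by
    rw [exp_eq_sum (pow_eq_zero_of_le K.le_succ hK), Finset.sum_range_succ']
    simp
  calc p * exp a
      = (∑ j ∈ Finset.range K, ((j + 1).factorial : ℚ)⁻¹ • a ^ (j + 1) + 1) * p +
          (∑ j ∈ Finset.range K, (j.factorial : ℚ)⁻¹ • a ^ j) * ⁅p, a⁆ := by
        simp only [hexp, mul_add, Finset.mul_sum, hterm, Finset.sum_add_distrib, ← Finset.sum_mul,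
          add_mul, mul_one, one_mul]
        abel
    _ = exp a * (p + ⁅p, a⁆) := by rw [← hexp, ← exp_eq_sum hK, mul_add]

end Exp

theorem map_exp_apply_of_semiconj {R S V V' : Type*} [Ring R] [Ring S] {φ : R →+* S}
    [AddCommGroup V] [Module R V] [Module ℚ V] [AddCommGroup V'] [Module S V'] [Module ℚ V']
    {σ : V →ₛₗ[φ] V'} {N : Module.End R V} {N' : Module.End S V'} (hN : IsNilpotent N)
    (hN' : IsNilpotent N') (h : ∀ v, σ (N v) = N' (σ v)) (v : V) :
    σ (exp N v) = exp N' (σ v) := by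
  obtain ⟨K, hK⟩ := hN
  obtain ⟨L, hL⟩ := hN'
  have hpow (j : ℕ) : σ ((N ^ j) v) = (N' ^ j) (σ v) := by
    simpa only [Module.End.pow_apply] using (show Function.Semiconj σ N N' from h).iterate_right j v
  simp [exp_eq_sum (pow_eq_zero_of_le (le_max_left K L) hK),
    exp_eq_sum (pow_eq_zero_of_le (le_max_right K L) hL), hpow, map_rat_smul]

section Projection

variable {ι R V : Type*} [DecidableEq ι] [Semiring R] [AddCommMonoid V] [Module R V]
  (I : ι → Submodule R V) [Decomposition I]

/-- The projection of `V = ⨁ i, I i` onto the summand `I a`, as an endomorphism of `V`. -/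
def proj (a : ι) : Module.End R V :=
  (I a).subtype ∘ₗ component R ι (fun i => I i) a ∘ₗ (decomposeLinearEquiv I).toLinearMap

variable {I}

theorem proj_mem (a : ι) (x : V) : proj I a x ∈ I a :=
  (decompose I x a).2

theorem proj_of_mem {a : ι} {x : V} (hx : x ∈ I a) : proj I a x = x :=
  decompose_of_mem_same I hx

theorem proj_of_mem_ne {a b : ι} {x : V} (hx : x ∈ I a) (hab : a ≠ b) : proj I b x = 0 :=
  decompose_of_mem_ne I hx hab

theorem finite_setOf_proj_ne_zero (x : V) : {a | proj I a x ≠ 0}.Finite := by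
  classical
  refine (decompose I x).support.finite_toSet.subset fun a ha => ?_
  exact DFinsupp.mem_support_iff.2 fun h => ha (congrArg Subtype.val h)

theorem mem_of_forall_proj_mem {S : Submodule R V} {x : V} (h : ∀ a, proj I a x ∈ S) : x ∈ S := by
  classical
  rw [← sum_support_decompose I x]
  exact S.sum_mem fun a _ => h a

theorem eq_zero_of_forall_proj_eq_zero {x : V} (h : ∀ a, proj I a x = 0) : x = 0 :=
  (Submodule.mem_bot R).1 <| mem_of_forall_proj_mem fun a => (Submodule.mem_bot R).2 (h a)

theorem mem_biSup_iff_proj_eq_zero {s : ι → Prop} {x : V} :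
    x ∈ ⨆ a, ⨆ _ : s a, I a ↔ ∀ a, ¬ s a → proj I a x = 0 := by
  refine ⟨fun hx a ha => ?_, fun hx => mem_of_forall_proj_mem (I := I) fun a => ?_⟩
  · have hker : ⨆ b, ⨆ _ : s b, I b ≤ LinearMap.ker (proj I a) :=
      iSup₂_le fun b hb y hy => proj_of_mem_ne hy fun hba => ha (hba ▸ hb)
    exact hker hx
  · by_cases ha : s a
    · exact Submodule.mem_iSup_of_mem a (Submodule.mem_iSup_of_mem ha (proj_mem a x))
    · exact hx a ha ▸ Submodule.zero_mem _

theorem proj_map_apply {f : Module.End R V} {φ : ι → ι} (hφ : φ.Injective)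
    (hf : ∀ a, (I a).map f ≤ I (φ a)) (a : ι) (x : V) : proj I (φ a) (f x) = f (proj I a x) := by
  suffices proj I (φ a) ∘ₗ f = f ∘ₗ proj I a from LinearMap.congr_fun this x
  refine decompose_lhom_ext I fun b => LinearMap.ext fun y => ?_
  have hfy : f y ∈ I (φ b) := hf b (Submodule.mem_map_of_mem y.2)
  by_cases hba : b = a
  · subst hba
    simp only [LinearMap.comp_apply, Submodule.subtype_apply, proj_of_mem hfy, proj_of_mem y.2]
  · simp only [LinearMap.comp_apply, Submodule.subtype_apply, proj_of_mem_ne y.2 hba,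
      proj_of_mem_ne hfy (hφ.ne hba), map_zero]

end Projection

section DegreeFiltration

variable {ι R V : Type*} [Ring R] [AddCommGroup V] [Module R V]

/-- The decreasing filtration of `V` by degree, where `I a` has degree `f a`. On a bigrading,
`f = Prod.fst` gives the Hodge filtration and `f = Prod.snd` its conjugate. -/
def degreeFiltration (I : ι → Submodule R V) (f : ι → ℤ) (r : ℤ) : Submodule R V :=
  ⨆ a, ⨆ _ : r ≤ f a, I a

variable {I : ι → Submodule R V} {f : ι → ℤ} {r : ℤ}

theorem le_degreeFiltration {a : ι} (h : r ≤ f a) : I a ≤ degreeFiltration I f r :=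
  le_iSup₂_of_le a h le_rfl

theorem degreeFiltration_le_iff {S : Submodule R V} :
    degreeFiltration I f r ≤ S ↔ ∀ a, r ≤ f a → I a ≤ S :=
  iSup₂_le_iff

theorem map_degreeFiltration {S V' : Type*} [Ring S] [AddCommGroup V'] [Module S V'] {φ : R →+* S}
    [RingHomSurjective φ] {σ : V →ₛₗ[φ] V'} {I' : ι → Submodule S V'} (e : ι ≃ ι)
    (hσ : ∀ a, (I a).map σ = I' (e a)) :
    (degreeFiltration I f r).map σ = degreeFiltration I' (f ∘ e.symm) r := by
  simp only [degreeFiltration, Submodule.map_iSup, hσ]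
  exact e.iSup_congr fun a => by simp

variable [DecidableEq ι] [Decomposition I]

variable (I f) in
/-- The endomorphism acting on each `I a` as multiplication by its degree `f a`. -/
def degreeOperator : Module.End R V :=
  toModule R ι V (fun a => f a • (I a).subtype) ∘ₗ (decomposeLinearEquiv I).toLinearMap

theorem degreeOperator_of_mem {a : ι} {x : V} (hx : x ∈ I a) :
    degreeOperator I f x = f a • x := by
  lift x to I a using hx
  simp [degreeOperator]

theorem proj_degreeOperator (a : ι) (x : V) :
    proj I a (degreeOperator I f x) = f a • proj I a x := by
  suffices proj I a ∘ₗ degreeOperator I f = f a • proj I a from LinearMap.congr_fun this x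
  refine decompose_lhom_ext I fun b => LinearMap.ext fun y => ?_
  by_cases hba : b = a
  · subst hba
    simp [degreeOperator_of_mem y.2]
  · simp [degreeOperator_of_mem y.2, proj_of_mem_ne y.2 hba]

theorem degreeOperator_mem_degreeFiltration (g : ι → ℤ) {x : V}
    (hx : x ∈ degreeFiltration I g r) : degreeOperator I f x ∈ degreeFiltration I g r := by
  suffices degreeFiltration I g r ≤ (degreeFiltration I g r).comap (degreeOperator I f) from this hx
  refine degreeFiltration_le_iff.2 fun a ha y hy => ?_
  rw [Submodule.mem_comap, degreeOperator_of_mem hy]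
  exact zsmul_mem (le_degreeFiltration ha hy) _

theorem degreeOperator_sub_smul_mem_degreeFiltration {x : V} (hx : x ∈ degreeFiltration I f r) :
    degreeOperator I f x - r • x ∈ degreeFiltration I f (r + 1) := by
  suffices degreeFiltration I f r ≤
      (degreeFiltration I f (r + 1)).comap (degreeOperator I f - r • LinearMap.id) from this hx
  refine degreeFiltration_le_iff.2 fun a ha y hy => ?_
  have happly : (degreeOperator I f - r • LinearMap.id : Module.End R V) y = (f a - r) • y := by
    simp [degreeOperator_of_mem hy, sub_smul]
  rw [Submodule.mem_comap, happly]
  rcases ha.eq_or_lt with heq | hlt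
  · rw [heq, sub_self, zero_smul]
    exact Submodule.zero_mem _
  · exact zsmul_mem (le_degreeFiltration hlt hy) _

end DegreeFiltration

section Bigraded

variable {R V : Type*} [CommRing R] [AddCommGroup V] [Module R V]
  {I : ℤ × ℤ → Submodule R V} {N : Module.End R V} {d : ℤ}

theorem map_pow_le (hN : ∀ a, (I a).map N ≤ I (a - 1)) (j : ℕ) (a : ℤ × ℤ) :
    (I a).map (N ^ j) ≤ I (a - j) := by
  induction j generalizing a with
  | zero => simp [Module.End.one_eq_id]
  | succ j ih =>
    rw [pow_succ', Module.End.mul_eq_comp, Submodule.map_comp, Nat.cast_succ, ← sub_sub]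
    exact (Submodule.map_mono (ih a)).trans (hN _)

theorem lie_degreeOperator_fst [Decomposition I] (hN : ∀ a, (I a).map N ≤ I (a - 1)) :
    ⁅degreeOperator I Prod.fst, N⁆ = -N := by
  refine decompose_lhom_ext I fun a => LinearMap.ext fun y => ?_
  have hNy : N y ∈ I (a - 1) := hN a (Submodule.mem_map_of_mem y.2)
  simp [Ring.lie_def, degreeOperator_of_mem y.2, degreeOperator_of_mem hNy, sub_smul]

theorem proj_pow_apply [Decomposition I] (hN : ∀ a, (I a).map N ≤ I (a - 1)) (j : ℕ)
    (a : ℤ × ℤ) (x : V) : proj I (a - j) ((N ^ j) x) = (N ^ j) (proj I a x) :=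
  proj_map_apply (φ := fun a => a - (j : ℤ × ℤ)) sub_left_injective (map_pow_le hN j) a x

variable (I N d) in
/-- `N` has bidegree `(-1, -1)` and satisfies the hard Lefschetz property centred at weight `d`:
`N ^ l` maps `I (p, q)` isomorphically onto `I (p - l, q - l)` whenever `p + q = d + l`. Integers
are cast diagonally into `ℤ × ℤ`, so that `a - l` is `(a.1 - l, a.2 - l)`. -/
structure IsLefschetz : Prop where
  map_le : ∀ a, (I a).map N ≤ I (a - 1)
  disjoint_ker_pow : ∀ a (l : ℕ), a.1 + a.2 = d + l → Disjoint (I a) (LinearMap.ker (N ^ l))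
  le_map_pow : ∀ a (l : ℕ), a.1 + a.2 = d + l → I (a - l) ≤ (I a).map (N ^ l)

theorem IsLefschetz.units_smul (h : IsLefschetz I N d) (u : Rˣ) : IsLefschetz I (u • N) d where
  map_le a := by
    rintro _ ⟨x, hx, rfl⟩
    exact (I (a - 1)).smul_mem u (h.map_le a (Submodule.mem_map_of_mem hx))
  disjoint_ker_pow a l hl := by
    have hker : LinearMap.ker ((u • N) ^ l) = LinearMap.ker (N ^ l) := by
      ext x
      simp [smul_pow, smul_eq_zero_iff_eq]
    exact hker ▸ h.disjoint_ker_pow a l hl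
  le_map_pow a l hl x hx := by
    obtain ⟨v, hv, rfl⟩ := h.le_map_pow a l hl hx
    refine ⟨(u ^ l)⁻¹ • v, Submodule.smul_of_tower_mem _ _ hv, ?_⟩
    rw [smul_pow, LinearMap.smul_apply, LinearMap.map_smul_of_tower, smul_inv_smul]

theorem IsLefschetz.of_weightFiltration [Decomposition I] (hN : ∀ a, (I a).map N ≤ I (a - 1))
    {W : ℤ → Submodule R V} (hW : ∀ l, W l = ⨆ a : ℤ × ℤ, ⨆ _ : a.1 + a.2 ≤ l, I a)
    (hWN : ∀ l : ℕ, (∀ x ∈ W (d + l), (N ^ l) x ∈ W (d - l - 1) → x ∈ W (d + l - 1)) ∧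
      W (d - l) ≤ (W (d + l)).map (N ^ l) ⊔ W (d - l - 1)) :
    IsLefschetz I N d where
  map_le := hN
  disjoint_ker_pow a l hl := by
    refine LinearMap.disjoint_ker.2 fun x hx hNx => ?_
    have hxW : x ∈ W (d + l) := by
      rw [hW]
      exact Submodule.mem_iSup_of_mem a (Submodule.mem_iSup_of_mem hl.le hx)
    have hxW' := (hWN l).1 x hxW (hNx ▸ Submodule.zero_mem _)
    rw [hW, mem_biSup_iff_proj_eq_zero] at hxW'
    rw [← proj_of_mem hx, hxW' a (by omega)]
  le_map_pow a l hl u hu := by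
    have hwt : (a - l).1 + (a - l).2 = d - l := by
      simp only [Prod.fst_sub, Prod.snd_sub, Prod.fst_natCast, Prod.snd_natCast]
      omega
    have huW : u ∈ W (d - l) := by
      rw [hW]
      exact Submodule.mem_iSup_of_mem _ (Submodule.mem_iSup_of_mem hwt.le hu)
    obtain ⟨_, ⟨v, -, rfl⟩, r, hr, rfl⟩ := Submodule.mem_sup.1 ((hWN l).2 huW)
    rw [hW, mem_biSup_iff_proj_eq_zero] at hr
    refine ⟨proj I a v, proj_mem a v, ?_⟩
    rw [← proj_of_mem hu, map_add, hr _ (by omega), add_zero, proj_pow_apply hN]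

theorem IsLefschetz.exists_pow_apply_eq (h : IsLefschetz I N d) {a : ℤ × ℤ} {x : V}
    (hx : x ∈ I a) : ∃ l : ℕ, d - a.1 ≤ a.2 + l ∧ ∃ v ∈ I (a + l), (N ^ l) v = x := by
  rcases le_total (d - a.1) a.2 with ha | ha
  · exact ⟨0, by simpa using ha, x, by simpa using hx, by simp⟩
  · lift d - a.1 - a.2 to ℕ using sub_nonneg.2 ha with l hl
    have hwt : (a + l).1 + (a + l).2 = d + l := by
      simp only [Prod.fst_add, Prod.snd_add, Prod.fst_natCast, Prod.snd_natCast]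
      omega
    refine ⟨l, by omega, h.le_map_pow (a + l) l hwt ?_⟩
    rwa [add_sub_cancel_right]

variable [Module ℚ V]

theorem degreeOperator_sub_smul_mem_map_exp [Decomposition I]
    (hN : ∀ a, (I a).map N ≤ I (a - 1)) (hnil : IsNilpotent N) (k : ℤ) {m : ℤ} {x : V}
    (hx : x ∈ (degreeFiltration I Prod.snd m).map (exp N)) :
    degreeOperator I Prod.fst x - k • x ∈ (degreeFiltration I Prod.snd (m - 1)).map (exp N) := by
  obtain ⟨y, hy, rfl⟩ := hx
  have hexp : degreeOperator I Prod.fst (exp N y) = exp N (degreeOperator I Prod.fst y - N y) := by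
    have hlie := lie_degreeOperator_fst hN
    have := mul_exp_of_commute_lie hnil (hlie ▸ (Commute.refl N).neg_right)
    simpa [hlie, sub_eq_add_neg] using LinearMap.congr_fun this y
  have hmono : degreeFiltration I Prod.snd m ≤ degreeFiltration I Prod.snd (m - 1) :=
    degreeFiltration_le_iff.2 fun a ha => le_degreeFiltration (by omega)
  have hNy : N y ∈ degreeFiltration I Prod.snd (m - 1) := by
    suffices degreeFiltration I Prod.snd m ≤ (degreeFiltration I Prod.snd (m - 1)).comap N from
      this hy
    exact degreeFiltration_le_iff.2 fun a ha => Submodule.map_le_iff_le_comap.1 <|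
      (hN a).trans (le_degreeFiltration (sub_le_sub_right ha 1))
  rw [hexp, ← map_zsmul, ← map_sub]
  exact Submodule.mem_map_of_mem <| sub_mem
    (sub_mem (hmono (degreeOperator_mem_degreeFiltration _ hy)) hNy) (zsmul_mem (hmono hy) k)

theorem proj_exp_apply [Decomposition I] (hN : ∀ a, (I a).map N ≤ I (a - 1))
    (hnil : IsNilpotent N) {a : ℤ × ℤ} {x : V} (hx : ∀ b : ℤ × ℤ, b.1 ≠ a.1 → proj I b x = 0)
    (j : ℕ) : proj I (a - j) (exp N x) = (j.factorial : ℚ)⁻¹ • (N ^ j) (proj I a x) := by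
  obtain ⟨K, hK⟩ := hnil
  have hproj (i : ℕ) : proj I (a - j) ((N ^ i) x) = (N ^ i) (proj I (a - j + i) x) := by
    rw [← proj_pow_apply hN, add_sub_cancel_right]
  rw [exp_eq_sum (pow_eq_zero_of_le (Nat.le_add_right K (j + 1)) hK)]
  simp only [LinearMap.sum_apply, LinearMap.smul_apply, map_sum, map_rat_smul, hproj]
  rw [Finset.sum_eq_single_of_mem j (Finset.mem_range.2 (by omega)), sub_add_cancel]
  intro i _ hij
  rw [hx _ (by simpa [sub_add_eq_add_sub, sub_eq_iff_eq_add] using hij), map_zero, smul_zero]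

theorem IsLefschetz.eq_zero_of_exp_apply_mem [Decomposition I] (h : IsLefschetz I N d)
    (hnil : IsNilpotent N) {k : ℤ} {x : V} (hx : ∀ a : ℤ × ℤ, a.1 ≠ k → proj I a x = 0)
    (hexp : exp N x ∈ degreeFiltration I Prod.snd (d - k + 1)) : x = 0 := by
  have hpow (q : ℤ) (j : ℕ) (hj : q - j ≤ d - k) : (N ^ j) (proj I (k, q) x) = 0 := by
    have hcomp := proj_exp_apply h.map_le hnil (a := (k, q)) hx j
    have hdeg : ¬ d - k + 1 ≤ ((k, q) - (j : ℤ × ℤ)).2 := by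
      simp only [Prod.snd_sub, Prod.snd_natCast]
      omega
    rw [mem_biSup_iff_proj_eq_zero.1 hexp _ hdeg] at hcomp
    exact (smul_eq_zero_iff_right (by positivity)).1 hcomp.symm
  refine eq_zero_of_forall_proj_eq_zero (I := I) fun ⟨p, q⟩ => ?_
  rcases eq_or_ne p k with rfl | hp
  · rcases le_total q (d - p) with hq | hq
    · simpa using hpow q 0 (by simpa using hq)
    · lift q - (d - p) to ℕ using sub_nonneg.2 hq with l hl
      exact LinearMap.disjoint_ker.1 (h.disjoint_ker_pow (p, q) l (by lia)) _ (proj_mem _ x)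
        (hpow q l (by omega))
  · exact hx _ hp

theorem IsLefschetz.disjoint_map_exp [Decomposition I] (h : IsLefschetz I N d)
    (hnil : IsNilpotent N) (k : ℤ) :
    Disjoint (degreeFiltration I Prod.fst k)
      ((degreeFiltration I Prod.snd (d - k + 1)).map (exp N)) := by
  have key (n : ℕ) : ∀ k x, x ∈ degreeFiltration I Prod.fst k →
      x ∈ (degreeFiltration I Prod.snd (d - k + 1)).map (exp N) →
      (∀ a : ℤ × ℤ, k + n ≤ a.1 → proj I a x = 0) → x = 0 := by
    induction n with
    | zero =>
      intro k x hxF _ hbound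
      refine eq_zero_of_forall_proj_eq_zero (I := I) fun a => ?_
      by_cases ha : k ≤ a.1
      · exact hbound a (by simpa using ha)
      · exact mem_biSup_iff_proj_eq_zero.1 hxF a ha
    | succ n ih =>
      intro k x hxF hxG hbound
      have hproj (a : ℤ × ℤ) :
          proj I a (degreeOperator I Prod.fst x - k • x) = (a.1 - k) • proj I a x := by
        rw [map_sub, proj_degreeOperator, map_zsmul, sub_smul]
      have hzero : degreeOperator I Prod.fst x - k • x = 0 := by
        refine ih (k + 1) _ (degreeOperator_sub_smul_mem_degreeFiltration hxF) ?_ fun a ha => ?_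
        · convert degreeOperator_sub_smul_mem_map_exp h.map_le hnil k hxG using 3
          ring
        · rw [hproj, hbound a (by push_cast; omega), smul_zero]
      have hpure (a : ℤ × ℤ) (ha : a.1 ≠ k) : proj I a x = 0 := by
        have := hproj a
        rw [hzero, map_zero, ← Int.cast_smul_eq_zsmul ℚ] at this
        exact (smul_eq_zero_iff_right (by exact_mod_cast sub_ne_zero.2 ha)).1 this.symm
      obtain ⟨y, hy, rfl⟩ := hxG
      refine (neg_one_smul R N ▸ h.units_smul (-1)).eq_zero_of_exp_apply_mem hnil.neg hpure ?_
      rwa [← Module.End.mul_apply, exp_neg_mul_exp_self hnil]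
  refine Submodule.disjoint_def.2 fun x hxF hxG => ?_
  obtain ⟨B, hB⟩ := ((finite_setOf_proj_ne_zero (I := I) x).image Prod.fst).bddAbove
  refine key (B + 1 - k).toNat k x hxF hxG fun a ha => by_contra fun hne => ?_
  have := hB ⟨a, hne, rfl⟩
  omega

variable (I N d) in
/-- The sum `F^k + exp(N) G^{d-k+1}` of the two filtration steps that are to be complementary. -/
noncomputable def opposedSum (k : ℤ) : Submodule R V :=
  degreeFiltration I Prod.fst k ⊔ (degreeFiltration I Prod.snd (d - k + 1)).map (exp N)

theorem degreeOperator_sub_smul_mem_opposedSum [Decomposition I]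
    (hN : ∀ a, (I a).map N ≤ I (a - 1)) (hnil : IsNilpotent N) {k : ℤ} {x : V}
    (hx : x ∈ opposedSum I N d k) :
    degreeOperator I Prod.fst x - k • x ∈ opposedSum I N d (k + 1) := by
  obtain ⟨y, hy, z, hz, rfl⟩ := Submodule.mem_sup.1 hx
  have hz' := degreeOperator_sub_smul_mem_map_exp hN hnil k hz
  rw [show d - k + 1 - 1 = d - (k + 1) + 1 by ring] at hz'
  rw [map_add, smul_add, add_sub_add_comm]
  exact Submodule.add_mem_sup (degreeOperator_sub_smul_mem_degreeFiltration hy) hz'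

variable [Algebra ℚ R]

theorem mem_of_zsmul_mem {S : Submodule R V} {n : ℤ} (hn : n ≠ 0) {x : V} (hx : n • x ∈ S) :
    x ∈ S := by
  rw [← Int.cast_smul_eq_zsmul ℚ] at hx
  exact (S.smul_mem_iff (Int.cast_ne_zero.2 hn)).1 hx

theorem IsLefschetz.mem_opposedSum_of_pow_apply_mem (h : IsLefschetz I N d)
    (hnil : IsNilpotent N) {a : ℤ × ℤ} {x : V} (hx : x ∈ I a)
    (hpow : ∀ i : ℕ, i ≠ 0 → (N ^ i) x ∈ opposedSum I N d (a.1 + 1)) :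
    x ∈ opposedSum I N d (a.1 + 1) := by
  obtain ⟨l, hl, v, hv, rfl⟩ := h.exists_pow_apply_eq hx
  obtain ⟨K, hK⟩ := hnil
  have hexp : exp N v ∈ opposedSum I N d (a.1 + 1) :=
    Submodule.mem_sup_right <| Submodule.mem_map_of_mem <| le_degreeFiltration (by
      simp only [Prod.snd_add, Prod.snd_natCast]
      omega) hv
  have hother (j : ℕ) (hj : j ≠ l) : (N ^ j) v ∈ opposedSum I N d (a.1 + 1) := by
    rcases hj.lt_or_gt with hlt | hgt
    · refine Submodule.mem_sup_left <| le_degreeFiltration ?_ <|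
        map_pow_le h.map_le j _ (Submodule.mem_map_of_mem hv)
      simp only [Prod.fst_sub, Prod.fst_add, Prod.fst_natCast]
      omega
    · have := hpow (j - l) (by omega)
      rwa [← Module.End.mul_apply, ← pow_add, Nat.sub_add_cancel hgt.le] at this
  rw [exp_eq_sum (pow_eq_zero_of_le (Nat.le_add_right K (l + 1)) hK), LinearMap.sum_apply,
    ← Finset.add_sum_erase _ _ (Finset.mem_range.2 (by omega : l < K + (l + 1)))] at hexp
  have hrest := (opposedSum I N d (a.1 + 1)).sum_mem
      (t := (Finset.range (K + (l + 1))).erase l) fun j hj =>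
    Submodule.smul_of_tower_mem _ (j.factorial : ℚ)⁻¹ (hother j (Finset.ne_of_mem_erase hj))
  have hterm := (Submodule.add_mem_iff_left _ hrest).1 hexp
  exact (Submodule.smul_mem_iff _ (by positivity)).1 hterm

theorem IsLefschetz.mem_opposedSum [Decomposition I] (h : IsLefschetz I N d)
    (hnil : IsNilpotent N) (n : ℕ) : ∀ {a : ℤ × ℤ} {x : V}, x ∈ I a → (N ^ n) x = 0 →
      ∀ k, x ∈ opposedSum I N d k := by
  induction n with
  | zero =>
    intro a x _ hx k
    rw [show x = 0 by simpa using hx]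
    exact Submodule.zero_mem _
  | succ n ih =>
    intro a x hxa hx k
    rcases le_or_gt k a.1 with hk | hk
    · exact Submodule.mem_sup_left (le_degreeFiltration hk hxa)
    induction k, hk using Int.leInduction with
    | base =>
      refine h.mem_opposedSum_of_pow_apply_mem hnil hxa fun i hi => ?_
      refine ih (map_pow_le h.map_le i a (Submodule.mem_map_of_mem hxa)) ?_ _
      obtain ⟨i, rfl⟩ := Nat.exists_eq_succ_of_ne_zero hi
      rw [← Module.End.mul_apply, ← pow_add, show n + i.succ = i + (n + 1) by omega, pow_add,
        Module.End.mul_apply, hx, map_zero]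
    | succ k hk ihk =>
      have := degreeOperator_sub_smul_mem_opposedSum h.map_le hnil ihk
      rw [degreeOperator_of_mem hxa, ← sub_smul] at this
      exact mem_of_zsmul_mem (by omega) this

theorem IsLefschetz.isCompl_map_exp [Decomposition I] (h : IsLefschetz I N d)
    (hnil : IsNilpotent N) (k : ℤ) :
    IsCompl (degreeFiltration I Prod.fst k)
      ((degreeFiltration I Prod.snd (d - k + 1)).map (exp N)) := by
  refine ⟨h.disjoint_map_exp hnil k, codisjoint_iff.2 <| eq_top_iff.2 fun x _ => ?_⟩
  obtain ⟨K, hK⟩ := id hnil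
  exact mem_of_forall_proj_mem (I := I) fun a =>
    h.mem_opposedSum hnil K (proj_mem a x) (by rw [hK, LinearMap.zero_apply]) k

theorem IsLefschetz.isCompl_map_exp_smul [Decomposition I] (h : IsLefschetz I N d)
    (hnil : IsNilpotent N) {z w : R} (hzw : IsUnit (w - z)) (k : ℤ) :
    IsCompl ((degreeFiltration I Prod.fst k).map (exp (z • N)))
      ((degreeFiltration I Prod.snd (d - k + 1)).map (exp (w • N))) := by
  obtain ⟨u, hu⟩ := hzw
  have hnilu : IsNilpotent (u • N) := hnil.smul (u : R)
  have hcompl := (h.units_smul u).isCompl_map_exp hnilu k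
  have hexp : exp (w • N) = exp (z • N) * exp (u • N) := by
    rw [← exp_add_of_commute (((Commute.refl N).smul_left z).smul_right u) (hnil.smul z)
      hnilu, Units.smul_def, hu, ← add_smul, add_sub_cancel]
  have hbij := (Module.End.isUnit_iff _).1 (isUnit_exp (hnil.smul z))
  rw [hexp, Module.End.mul_eq_comp, Submodule.map_comp]
  exact ⟨Submodule.disjoint_map hbij.injective hcompl.disjoint,
    Submodule.codisjoint_map hbij.surjective hcompl.codisjoint⟩

end Bigraded

section Conjugation

variable {H : Type*} [AddCommGroup H] [Module ℂ H] [Module ℚ H] {I : ℤ × ℤ → Submodule ℂ H}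
  {N : Module.End ℂ H} {σ : H →ₗ⋆[ℂ] H}

theorem exp_smul_eq_sum_div {K : ℕ} (hK : N ^ K = 0) (z : ℂ) :
    exp (z • N) = ∑ j ∈ Finset.range K, (z ^ j / (j.factorial : ℂ)) • N ^ j := by
  rw [exp_eq_sum (k := K) (by rw [smul_pow, hK, smul_zero])]
  refine Finset.sum_congr rfl fun j _ => ?_
  rw [smul_pow, ← Rat.cast_smul_eq_qsmul ℂ, smul_smul, div_eq_inv_mul]
  simp

theorem map_conj_map_exp_smul_degreeFiltration (hI : ∀ a, (I a).map σ = I a.swap)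
    (hN : IsNilpotent N) (hσN : ∀ v, σ (N v) = N (σ v)) (z : ℂ) (r : ℤ) :
    ((degreeFiltration I Prod.fst r).map (exp (z • N))).map σ =
      (degreeFiltration I Prod.snd r).map (exp (starRingEnd ℂ z • N)) := by
  have hexp : σ.comp (exp (z • N)) = (exp (starRingEnd ℂ z • N)).comp σ :=
    LinearMap.ext <| map_exp_apply_of_semiconj (hN.smul z) (hN.smul _) fun v => by simp [hσN]
  rw [← Submodule.map_comp, hexp, Submodule.map_comp,
    map_degreeFiltration (Equiv.prodComm ℤ ℤ) hI]
  rfl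

end Conjugation

end SplitMHS

theorem split_mhs_opposedness_general {H : Type*} [AddCommGroup H] [Module ℂ H]
    (σ : H → H) (hσadd : ∀ u v : H, σ (u + v) = σ u + σ v)
    (hσsmul : ∀ (c : ℂ) (v : H), σ (c • v) = starRingEnd ℂ c • σ v)
    (d : ℤ) (I : ℤ × ℤ → Submodule ℂ H) (hI : IsInternal I)
    (hIconj : ∀ pq : ℤ × ℤ, Submodule.span ℂ (σ '' I pq) = I (pq.2, pq.1))
    (W F : ℤ → Submodule ℂ H)
    (hW : ∀ l : ℤ, W l = ⨆ pq : ℤ × ℤ, ⨆ _ : pq.1 + pq.2 ≤ l, I pq)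
    (hF : ∀ r : ℤ, F r = ⨆ pq : ℤ × ℤ, ⨆ _ : r ≤ pq.1, I pq)
    (N : H →ₗ[ℂ] H) (hNreal : ∀ v : H, σ (N v) = N (σ v))
    (hNI : ∀ pq : ℤ × ℤ, (I pq).map N ≤ I (pq.1 - 1, pq.2 - 1))
    (hWN : ∀ l : ℕ, (∀ x ∈ W (d + l), (N ^ l) x ∈ W (d - l - 1) → x ∈ W (d + l - 1)) ∧
      W (d - l) ≤ (W (d + l)).map (N ^ l) ⊔ W (d - l - 1))
    (K : ℕ) (hK : N ^ K = 0) (E : ℂ → (H →ₗ[ℂ] H))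
    (hE : ∀ z : ℂ, E z = ∑ j ∈ Finset.range K, (z ^ j / (j.factorial : ℂ)) • (N ^ j))
    (k : ℤ) (z : ℂ) (hz : z.im ≠ 0) :
    IsCompl ((F k).map (E z)) (Submodule.span ℂ (σ '' (F (d - k + 1)).map (E z))) := by
  let _ : Module ℚ H := Module.compHom H (algebraMap ℚ ℂ)
  let _ := hI.chooseDecomposition
  let conj : H →ₗ⋆[ℂ] H := { toFun := σ, map_add' := hσadd, map_smul' := hσsmul }
  have hspan (p : Submodule ℂ H) : Submodule.span ℂ (σ '' p) = p.map conj := (p.map conj).span_eq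
  simp only [hspan] at hIconj ⊢
  have hLefschetz : SplitMHS.IsLefschetz I N d := .of_weightFiltration hNI hW hWN
  have hconj_sub : IsUnit (starRingEnd ℂ z - z) :=
    (sub_ne_zero.2 fun h => hz (Complex.conj_eq_iff_im.1 h)).isUnit
  have hF' : F = SplitMHS.degreeFiltration I Prod.fst := funext hF
  rw [hE, ← SplitMHS.exp_smul_eq_sum_div hK, hF',
    SplitMHS.map_conj_map_exp_smul_degreeFiltration (σ := conj) hIconj ⟨K, hK⟩ hNreal]
  exact hLefschetz.isCompl_map_exp_smul ⟨K, hK⟩ hconj_sub k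

/-- Split case of the converse nilpotent orbit theorem: for a mixed Hodge
structure `(H, W, F)` split over `ℝ` (via a Deligne bigrading `I^{p,q}` with
`conj I^{p,q} = I^{q,p}`), with a real nilpotent `N` satisfying
`N I^{p,q} ⊆ I^{p-1,q-1}` and `W = W(N,d)`, the filtration `exp(zN) F^k` is
`d`-opposed to its complex conjugate whenever `Im z ≠ 0`:
`exp(zN) F^k ⊕ conj (exp(zN) F^{d-k+1}) = H`. -/
theorem split_mhs_opposedness
    (H : Type) [AddCommGroup H] [Module ℂ H] [FiniteDimensional ℂ H]
    -- real structure
    (σ : H → H)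
    (hσadd : ∀ u v : H, σ (u + v) = σ u + σ v)
    (hσsmul : ∀ (c : ℂ) (v : H), σ (c • v) = (starRingEnd ℂ c) • σ v)
    (hσinv : ∀ v : H, σ (σ v) = v)
    (d : ℤ)
    -- Deligne splitting
    (I : ℤ × ℤ → Submodule ℂ H)
    (hI : DirectSum.IsInternal I)
    (hIconj : ∀ pq : ℤ × ℤ,
      Submodule.span ℂ (σ '' (I pq : Set H)) = I (pq.2, pq.1))
    -- weight and Hodge filtrations of the split mixed Hodge structure
    (W F : ℤ → Submodule ℂ H)
    (hW : ∀ l : ℤ, W l = ⨆ pq : ℤ × ℤ, ⨆ _ : pq.1 + pq.2 ≤ l, I pq)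
    (hF : ∀ r : ℤ, F r = ⨆ pq : ℤ × ℤ, ⨆ _ : r ≤ pq.1, I pq)
    -- real nilpotent endomorphism of type (-1,-1)
    (N : H →ₗ[ℂ] H) (hNnil : IsNilpotent N)
    (hNreal : ∀ v : H, σ (N v) = N (σ v))
    (hNI : ∀ pq : ℤ × ℤ, Submodule.map N (I pq) ≤ I (pq.1 - 1, pq.2 - 1))
    -- W is the monodromy weight filtration of N centered at d
    (hWN : ∀ l : ℕ,
      (∀ x ∈ W (d + l), (N ^ l) x ∈ W (d - l - 1) → x ∈ W (d + l - 1)) ∧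
      (W (d - l) ≤ Submodule.map (N ^ l : H →ₗ[ℂ] H) (W (d + l)) ⊔ W (d - l - 1)))
    -- the exponential exp(zN)
    (K : ℕ) (hK : N ^ K = 0)
    (E : ℂ → (H →ₗ[ℂ] H))
    (hE : ∀ z : ℂ,
      E z = ∑ j ∈ Finset.range K, (z ^ j / (j.factorial : ℂ)) • (N ^ j)) :
    ∀ (k : ℤ) (z : ℂ), z.im ≠ 0 →
      IsCompl (Submodule.map (E z) (F k))
        (Submodule.span ℂ
          (σ '' (Submodule.map (E z) (F (d - k + 1)) : Set H))) := by
  exact split_mhs_opposedness_general σ hσadd hσsmul d I hI hIconj W F hW hF N hNreal hNI hWN K hK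
    E hE
end
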